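/- There exists an absolute constant C > 0 such that for all x > 1, y > 0 and t > 0 with xy ≤ t and y² ≥ 16·t, one has 0 < p(t,x,y) − p(t,1,y) ≤ C·x·(x−1)·(y²/t²)·p(t,1,y). -/

import Mathlib

open Real MeasureTheory

/-- Modified Bessel function of the first kind, order 0. -/
noncomputable def I0 (z : ℝ) : ℝ := ∑' n : ℕ, (z/2)^(2*n) / ((n.factorial : ℝ))^2

/-- Modified Bessel function of the first kind, order 1. -/
noncomputable def I1 (z : ℝ) : ℝ :=
  ∑' n : ℕ, (z/2)^(2*n+1) / ((n.factorial : ℝ) * ((n+1).factorial : ℝ))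

/-- Heat kernel of the Bessel operator `d²/dx² + (1/x) d/dx` on `(0,∞)`
with respect to the measure `y dy`. -/
noncomputable def pk (t x y : ℝ) : ℝ :=
  t⁻¹ * Real.exp (-(x^2 + y^2)/(2*t)) * I0 (x*y/t)

/-- The function `h` from (AC): Dirichlet heat kernel of `(1/2) d²/dx²` on `(1,∞)`
multiplied by `(xy)⁻¹`. -/
noncomputable def hker (t x y : ℝ) : ℝ :=
  (2*Real.pi*t)^(-(1:ℝ)/2) * (x*y)⁻¹ *
    (Real.exp (-(x-y)^2/(2*t)) - Real.exp (-(x+y-2)^2/(2*t)))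

/-!
In `u = z² / 4` the function `I0` is `∑ uⁿ / (n!)²`. Its derivative in `u` has coefficients
`1 / (n! (n + 1)!)`, at most those of the series itself and with constant term `1`, so `I0` grows
in `u` at a rate between `1` and `I0 z`.

Moving from `a` to `b` changes the heat kernel in two ways: the Gaussian factor loses at most the
proportion `δ = (b² - a²) / (2t)`, while the Bessel factor grows by at least the increment
`δ * y² / (2t)` of `u`. The gain wins as soon as `y²` exceeds `2t * I0 (by/t)`, and for the upper
bound the loss is simply discarded.
-/

theorem hasSum_I0 (z : ℝ) :
    HasSum (fun n : ℕ => (z ^ 2 / 4) ^ n / (n.factorial : ℝ) ^ 2) (I0 z) := by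
  have summable : Summable fun n : ℕ => (z ^ 2 / 4) ^ n / (n.factorial : ℝ) ^ 2 := by
    refine .of_nonneg_of_le (fun n => by positivity) (fun n => ?_)
      (Real.summable_pow_div_factorial (z ^ 2 / 4))
    have one_le_factorial : (1 : ℝ) ≤ n.factorial := mod_cast n.factorial_pos
    gcongr
    exact le_self_pow₀ one_le_factorial two_ne_zero
  convert! summable.hasSum using 1
  simp only [I0, pow_mul, div_pow]
  norm_num

@[simp]
theorem I0_zero : I0 0 = 1 := by
  refine (hasSum_I0 0).unique ?_
  convert! hasSum_ite_eq (0 : ℕ) (1 : ℝ) using 2 with n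
  cases n <;> simp

theorem sq_sub_sq_div_four_le_I0_sub_I0 {w z : ℝ} (h : |w| ≤ |z|) :
    (z ^ 2 - w ^ 2) / 4 ≤ I0 z - I0 w := by
  have hsq : w ^ 2 ≤ z ^ 2 := sq_le_sq.2 h
  have term_nonneg (n : ℕ) :
      0 ≤ (z ^ 2 / 4) ^ n / (n.factorial : ℝ) ^ 2 - (w ^ 2 / 4) ^ n / (n.factorial : ℝ) ^ 2 :=
    sub_nonneg.2 (by gcongr)
  simpa [sub_div] using le_hasSum ((hasSum_I0 z).sub (hasSum_I0 w)) 1 fun n _ => term_nonneg n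

theorem one_le_I0 (z : ℝ) : 1 ≤ I0 z := by
  have h : (z ^ 2 - 0 ^ 2) / 4 ≤ I0 z - I0 0 := sq_sub_sq_div_four_le_I0_sub_I0 (by simp)
  rw [I0_zero] at h
  linarith [sq_nonneg z]

theorem I0_pos (z : ℝ) : 0 < I0 z :=
  one_pos.trans_le (one_le_I0 z)

theorem pow_succ_sub_pow_succ_le {R : Type*} [CommRing R] [LinearOrder R] [IsOrderedRing R]
    {u v : R} (hv : 0 ≤ v) (h : v ≤ u) (n : ℕ) :
    u ^ (n + 1) - v ^ (n + 1) ≤ (n + 1) * (u - v) * u ^ n :=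
  calc u ^ (n + 1) - v ^ (n + 1) ≤ |u ^ (n + 1) - v ^ (n + 1)| := le_abs_self _
    _ ≤ |u - v| * (n + 1 : ℕ) * max |u| |v| ^ n := abs_pow_sub_pow_le ..
    _ = (n + 1) * (u - v) * u ^ n := by
      rw [abs_of_nonneg (sub_nonneg.2 h), abs_of_nonneg hv, abs_of_nonneg (hv.trans h),
        max_eq_left h]
      push_cast
      ring

theorem I0_sub_I0_le {w z : ℝ} (h : |w| ≤ |z|) :
    I0 z - I0 w ≤ (z ^ 2 - w ^ 2) / 4 * I0 z := by
  have hsq : w ^ 2 / 4 ≤ z ^ 2 / 4 := by linarith [sq_le_sq.2 h]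
  have tail := (hasSum_nat_add_iff' 1).2 ((hasSum_I0 z).sub (hasSum_I0 w))
  simp only [Finset.range_one, Finset.sum_singleton, pow_zero, sub_self, sub_zero] at tail
  refine hasSum_le (fun n => ?_) tail ((hasSum_I0 z).mul_left _)
  have one_le : (1 : ℝ) ≤ n + 1 := by simp
  have : 0 ≤ z ^ 2 / 4 - w ^ 2 / 4 := sub_nonneg.2 hsq
  calc (z ^ 2 / 4) ^ (n + 1) / ((n + 1).factorial : ℝ) ^ 2
        - (w ^ 2 / 4) ^ (n + 1) / ((n + 1).factorial : ℝ) ^ 2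
      = ((z ^ 2 / 4) ^ (n + 1) - (w ^ 2 / 4) ^ (n + 1)) / ((n + 1).factorial : ℝ) ^ 2 := by
        rw [sub_div]
    _ ≤ (n + 1) * (z ^ 2 / 4 - w ^ 2 / 4) * (z ^ 2 / 4) ^ n / ((n + 1).factorial : ℝ) ^ 2 := by
        gcongr
        exact pow_succ_sub_pow_succ_le (by positivity) hsq n
    _ = (z ^ 2 / 4 - w ^ 2 / 4) * (z ^ 2 / 4) ^ n / (n.factorial : ℝ) ^ 2 / (n + 1) := by
        rw [Nat.factorial_succ]
        push_cast
        field_simp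
    _ ≤ (z ^ 2 / 4 - w ^ 2 / 4) * (z ^ 2 / 4) ^ n / (n.factorial : ℝ) ^ 2 :=
        div_le_self (by positivity) one_le
    _ = (z ^ 2 - w ^ 2) / 4 * ((z ^ 2 / 4) ^ n / (n.factorial : ℝ) ^ 2) := by ring

theorem I0_le_four_thirds {z : ℝ} (h : |z| ≤ 1) : I0 z ≤ 4 / 3 := by
  have growth : I0 z - I0 0 ≤ (z ^ 2 - 0 ^ 2) / 4 * I0 z := I0_sub_I0_le (by simp)
  have hsq : z ^ 2 * I0 z ≤ 1 * I0 z :=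
    mul_le_mul_of_nonneg_right ((sq_le_one_iff_abs_le_one z).2 h) (I0_pos z).le
  rw [I0_zero] at growth
  linarith

theorem pk_sub_pk (t a b y : ℝ) :
    pk t b y - pk t a y = t⁻¹ * exp (-(a ^ 2 + y ^ 2) / (2 * t)) *
      (exp (-((b ^ 2 - a ^ 2) / (2 * t))) * I0 (b * y / t) - I0 (a * y / t)) := by
  have gaussian : exp (-(b ^ 2 + y ^ 2) / (2 * t)) =
      exp (-(a ^ 2 + y ^ 2) / (2 * t)) * exp (-((b ^ 2 - a ^ 2) / (2 * t))) := by
    rw [← exp_add]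
    ring_nf
  rw [pk, pk, gaussian]
  ring

theorem abs_mul_div_le_abs_mul_div {K : Type*} [Field K] [LinearOrder K] [IsStrictOrderedRing K]
    {a b : K} (h : |a| ≤ |b|) (y t : K) :
    |a * y / t| ≤ |b * y / t| := by
  simp only [abs_div, abs_mul]
  gcongr

theorem pk_lt_pk {t a b y : ℝ} (ht : 0 < t) (hab : |a| < |b|)
    (hy : 2 * t * I0 (b * y / t) < y ^ 2) : pk t a y < pk t b y := by
  set δ := (b ^ 2 - a ^ 2) / (2 * t) with hδ
  have δ_pos : 0 < δ := div_pos (sub_pos.2 (sq_lt_sq.2 hab)) (by positivity)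
  have I0_lt : I0 (b * y / t) < y ^ 2 / (2 * t) := by
    rwa [lt_div_iff₀' (by positivity)]
  have bessel_gain : δ * (y ^ 2 / (2 * t)) ≤ I0 (b * y / t) - I0 (a * y / t) := by
    convert! sq_sub_sq_div_four_le_I0_sub_I0 (abs_mul_div_le_abs_mul_div hab.le y t) using 1
    rw [hδ]
    ring
  have gaussian_loss : I0 (a * y / t) < exp (-δ) * I0 (b * y / t) :=
    calc I0 (a * y / t) ≤ I0 (b * y / t) - δ * (y ^ 2 / (2 * t)) := by linarith
      _ < I0 (b * y / t) - δ * I0 (b * y / t) := by gcongr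
      _ = (1 - δ) * I0 (b * y / t) := by ring
      _ ≤ exp (-δ) * I0 (b * y / t) := by
        gcongr
        · exact (I0_pos _).le
        · exact one_sub_le_exp_neg δ
  rw [← sub_pos, pk_sub_pk]
  have := sub_pos.2 gaussian_loss
  positivity

theorem pk_sub_pk_le {t a b : ℝ} (ht : 0 < t) (hab : |a| ≤ |b|) (y : ℝ) :
    pk t b y - pk t a y ≤
      (b ^ 2 - a ^ 2) * (y ^ 2 / t ^ 2) / 4 * I0 (b * y / t) * pk t a y := by
  have hsq : 0 ≤ b ^ 2 - a ^ 2 := sub_nonneg.2 (sq_le_sq.2 hab)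
  have exp_le_one : exp (-((b ^ 2 - a ^ 2) / (2 * t))) ≤ 1 :=
    exp_le_one_iff.2 (neg_nonpos.2 (by positivity))
  have I0_b_pos := I0_pos (b * y / t)
  have bessel_gain : exp (-((b ^ 2 - a ^ 2) / (2 * t))) * I0 (b * y / t) - I0 (a * y / t) ≤
      (b ^ 2 - a ^ 2) * (y ^ 2 / t ^ 2) / 4 * I0 (b * y / t) * I0 (a * y / t) :=
    calc exp (-((b ^ 2 - a ^ 2) / (2 * t))) * I0 (b * y / t) - I0 (a * y / t)
        ≤ I0 (b * y / t) - I0 (a * y / t) := by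
          gcongr
          exact mul_le_of_le_one_left I0_b_pos.le exp_le_one
      _ ≤ ((b * y / t) ^ 2 - (a * y / t) ^ 2) / 4 * I0 (b * y / t) :=
          I0_sub_I0_le (abs_mul_div_le_abs_mul_div hab y t)
      _ = (b ^ 2 - a ^ 2) * (y ^ 2 / t ^ 2) / 4 * I0 (b * y / t) := by ring
      _ ≤ (b ^ 2 - a ^ 2) * (y ^ 2 / t ^ 2) / 4 * I0 (b * y / t) * I0 (a * y / t) :=
          le_mul_of_one_le_right (by positivity) (one_le_I0 _)
  rw [pk_sub_pk]
  calc _ ≤ t⁻¹ * exp (-(a ^ 2 + y ^ 2) / (2 * t)) *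
        ((b ^ 2 - a ^ 2) * (y ^ 2 / t ^ 2) / 4 * I0 (b * y / t) * I0 (a * y / t)) := by gcongr
    _ = _ := by
      rw [pk]
      ring

theorem pk_pos {t : ℝ} (ht : 0 < t) (x y : ℝ) : 0 < pk t x y := by
  have := I0_pos (x * y / t)
  unfold pk
  positivity

theorem bessel_heat_kernel_space_difference :
    ∃ C : ℝ, 0 < C ∧ ∀ x y t : ℝ, 1 < x → 0 < y → 0 < t → x*y ≤ t → 16*t ≤ y^2 →
      0 < pk t x y - pk t 1 y ∧
      pk t x y - pk t 1 y ≤ C * (x * (x-1) * (y^2/t^2) * pk t 1 y) := by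
  refine ⟨2 / 3, by norm_num, fun x y t hx hy ht hxy hty => ?_⟩
  have habs : |1| < |x| := by rwa [abs_one, abs_of_pos (one_pos.trans hx)]
  have hI : I0 (x * y / t) ≤ 4 / 3 := by
    apply I0_le_four_thirds
    rwa [abs_of_pos (by positivity), div_le_one ht]
  have hp := pk_pos ht 1 y
  have hsq : x ^ 2 - 1 ^ 2 ≤ 2 * (x * (x - 1)) := by linarith [sq_nonneg (x - 1)]
  have : 0 ≤ x * (x - 1) := mul_nonneg (by linarith) (by linarith)
  constructor
  · refine sub_pos.2 (pk_lt_pk ht habs ?_)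
    calc 2 * t * I0 (x * y / t) ≤ 2 * t * (4 / 3) := by gcongr
      _ < 16 * t := by linarith
      _ ≤ y ^ 2 := hty
  · calc pk t x y - pk t 1 y
        ≤ (x ^ 2 - 1 ^ 2) * (y ^ 2 / t ^ 2) / 4 * I0 (x * y / t) * pk t 1 y :=
          pk_sub_pk_le ht habs.le y
      _ ≤ 2 * (x * (x - 1)) * (y ^ 2 / t ^ 2) / 4 * (4 / 3) * pk t 1 y := by
        gcongr
        exact (I0_pos _).le
      _ = 2 / 3 * (x * (x - 1) * (y ^ 2 / t ^ 2) * pk t 1 y) := by ring
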